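/- Let d ≥ 2, let r ≥ 0 and η be real, and let z ∈ {−1, +1}^{d−1}. Define θ ∈ ℝ^d by θ₁ = r cos η and θ_ℓ = r z_{ℓ−1} (sin η)/√(d−1) for ℓ = 2, …, d. Then for every x ∈ ℝ^d with ‖x‖₂ ≤ 1, one has r − ⟨x, θ⟩ ≥ (r/2) ∑_{ℓ=2}^d ((sin η)/√(d−1) − z_{ℓ−1} x_ℓ)². -/

import Mathlib

open scoped RealInnerProductSpace

/-- Let `d ≥ 2`, let `r ≥ 0` and `η` be real, and let `z ∈ {−1, +1}^{d−1}`.  Define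
`θ ∈ ℝ^d` by `θ₁ = r cos η` and `θ_ℓ = r z_{ℓ−1} (sin η)/√(d−1)` for `ℓ = 2, …, d`.
Then for every `x ∈ ℝ^d` with `‖x‖₂ ≤ 1`,
`r − ⟨x, θ⟩ ≥ (r/2) ∑_{ℓ=2}^d ((sin η)/√(d−1) − z_{ℓ−1} x_ℓ)²`. -/
theorem stmt_2 (d : ℕ) (hd : 2 ≤ d) (r : ℝ) (hr : 0 ≤ r) (η : ℝ) (z : Fin (d - 1) → ℝ)
    (hz : ∀ j, z j = 1 ∨ z j = -1)
    (θ : EuclideanSpace ℝ (Fin d))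
    (hθ0 : θ ⟨0, by omega⟩ = r * Real.cos η)
    (hθ : ∀ j : Fin (d - 1), θ ⟨j.val + 1, by have := j.isLt; omega⟩
        = r * z j * Real.sin η / Real.sqrt ((d : ℝ) - 1))
    (x : EuclideanSpace ℝ (Fin d)) (hx : ‖x‖ ≤ 1) :
    r / 2 * ∑ j : Fin (d - 1),
        (Real.sin η / Real.sqrt ((d : ℝ) - 1)
          - z j * x ⟨j.val + 1, by have := j.isLt; omega⟩) ^ 2
      ≤ r - ⟪x, θ⟫ := by
  obtain ⟨n, rfl⟩ : ∃ n, d = n + 1 := ⟨d - 1, by omega⟩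
  have hn : (0 : ℝ) < n := by
    have : 0 < n := by omega
    exact_mod_cast this
  have hcast : (((n + 1 : ℕ) : ℝ) - 1) = n := by push_cast; ring
  simp only [hcast] at hθ ⊢
  change Fin n → ℝ at z
  change ∀ j : Fin n, _ at hz
  change ∀ j : Fin n, θ j.succ = _ at hθ
  change θ 0 = _ at hθ0
  change r / 2 * ∑ j : Fin n, (Real.sin η / Real.sqrt n - z j * x j.succ) ^ 2 ≤ _
  have hxx : x 0 ^ 2 + ∑ j : Fin n, x j.succ ^ 2 ≤ 1 := by
    have h := EuclideanSpace.real_norm_sq_eq x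
    rw [Fin.sum_univ_succ] at h
    rw [← h]
    exact pow_le_one₀ (norm_nonneg _) hx
  have hin : ⟪x, θ⟫ = r * (x 0 * Real.cos η
      + ∑ j : Fin n, Real.sin η / Real.sqrt n * (z j * x j.succ)) := by
    rw [PiLp.inner_apply, Fin.sum_univ_succ, mul_add, Finset.mul_sum]
    congr 1
    · simp [hθ0]; ring
    · refine Finset.sum_congr rfl fun j _ => ?_
      simp only [hθ j, RCLike.inner_apply, conj_trivial]
      ring
  have hs : ∑ j : Fin n, (Real.sin η / Real.sqrt n - z j * x j.succ) ^ 2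
      = Real.sin η ^ 2 - 2 * ∑ j : Fin n, Real.sin η / Real.sqrt n * (z j * x j.succ)
        + ∑ j : Fin n, x j.succ ^ 2 := by
    have h1 : ∀ j : Fin n, (Real.sin η / Real.sqrt n - z j * x j.succ) ^ 2
        = Real.sin η ^ 2 / n - 2 * (Real.sin η / Real.sqrt n * (z j * x j.succ))
          + x j.succ ^ 2 := by
      intro j
      have hz2 : z j ^ 2 = 1 := by rcases hz j with h | h <;> rw [h] <;> norm_num
      rw [sub_sq, div_pow, Real.sq_sqrt hn.le, mul_pow, hz2]
      ring
    rw [Finset.sum_congr rfl fun j _ => h1 j, Finset.sum_add_distrib, Finset.sum_sub_distrib,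
      ← Finset.mul_sum]
    simp only [Finset.sum_const, Finset.card_univ, Fintype.card_fin, nsmul_eq_mul]
    rw [mul_div_cancel₀ _ hn.ne']
  rw [hs, hin]
  have hsc := Real.sin_sq_add_cos_sq η
  have key : Real.sin η ^ 2 + ∑ j : Fin n, x j.succ ^ 2 ≤ 2 - 2 * (x 0 * Real.cos η) := by
    nlinarith [sq_nonneg (x 0 - Real.cos η)]
  have := mul_le_mul_of_nonneg_left key hr
  linarith
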